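/- Let G be a connected graph and let k and λ be positive integers with k ≥ 2. If λ ≥ t_{k+1}/(k+1), then t_k ≥ t_{k+1} − λ + 1. (Theorem 1) -/

import Mathlib

open SimpleGraph

variable {V : Type*}

/-- A set of vertices is independent in `G`. -/
def IsIndSet (G : SimpleGraph V) (s : Set V) : Prop :=
  ∀ ⦃u⦄, u ∈ s → ∀ ⦃v⦄, v ∈ s → ¬ G.Adj u v

/-- The number of end-vertices (vertices of degree one) of a subgraph `H`. -/
noncomputable def endVertexCount {G : SimpleGraph V} (H : G.Subgraph) : ℕ :=
  {v : V | v ∈ H.verts ∧ (H.neighborSet v).ncard = 1}.ncard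

/-- `H` is a cycle; a single vertex and a single edge are regarded as
simple cycles of orders 1 and 2, respectively. -/
def IsCycleSubgraph {G : SimpleGraph V} (H : G.Subgraph) : Prop :=
  H.Connected ∧ (H.verts.ncard ≤ 2 ∨ ∀ v ∈ H.verts, (H.neighborSet v).ncard = 2)

/-- `H` is a `k`-ended tree in `G`: a tree with at most `k` end-vertices (leaves);
a cycle is regarded as a 1-ended tree. -/
def IsKEndedTree (G : SimpleGraph V) (k : ℕ) (H : G.Subgraph) : Prop :=
  (H.coe.IsTree ∧ endVertexCount H ≤ k) ∨ (1 ≤ k ∧ IsCycleSubgraph H)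

/-- `t k`: the order of a largest `k`-ended tree in `G`. -/
noncomputable def maxKEndedOrder (G : SimpleGraph V) (k : ℕ) : ℕ :=
  sSup {n | ∃ H : G.Subgraph, IsKEndedTree G k H ∧ H.verts.ncard = n}

/-- `σ m`: the minimum degree sum over independent sets of `m` vertices of `G`,
and `+∞` if the independence number of `G` is less than `m`. -/
noncomputable def minDegreeSum (G : SimpleGraph V) [Fintype V] [DecidableRel G.Adj]
    (m : ℕ) : ℕ∞ :=
  ⨅ s ∈ {s : Finset V | s.card = m ∧ IsIndSet G ↑s}, (∑ v ∈ s, G.degree v : ℕ∞)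

/-!
Root a tree with `k + 1 ≥ 3` leaves at a vertex `r` of degree at least three. Every vertex lies on
the geodesic from `r` to some leaf; choose such a leaf for each vertex other than `r`. By the
pigeonhole principle some leaf `x` is chosen by few vertices. The geodesics from `r` to the other
leaves form a subtree containing every vertex that did not choose `x`. Its leaves are leaves of the
tree other than `x`: a vertex other than `r` inside a geodesic has a neighbor on either side, and
`r` keeps all its neighbors except possibly the one towards `x`.
-/

section Geodesic

variable {W : Type*} {T : SimpleGraph W} {r u v w x y : W} {S : Set W}

/-- `v` is metrically between `u` and `w`. In a connected graph this says that `v` lies on a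
geodesic from `u` to `w`. -/
def OnGeodesic (T : SimpleGraph W) (u v w : W) : Prop :=
  T.dist u v + T.dist v w = T.dist u w

/-- The union of all geodesics from `r` to vertices of `S`. If `T` is a tree, this is the smallest
subtree containing `r` and `S`, provided that `S` is nonempty. -/
def geodesicCone (T : SimpleGraph W) (r : W) (S : Set W) : Set W :=
  {v | ∃ y ∈ S, OnGeodesic T r v y}

lemma onGeodesic_left (T : SimpleGraph W) (u v : W) : OnGeodesic T u u v := by
  simp [OnGeodesic]

lemma onGeodesic_right (T : SimpleGraph W) (u v : W) : OnGeodesic T u v v := by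
  simp [OnGeodesic]

namespace OnGeodesic

lemma symm (h : OnGeodesic T u v w) : OnGeodesic T w v u := by
  unfold OnGeodesic at *
  rw [T.dist_comm (u := w), T.dist_comm (u := v) (v := u), T.dist_comm (u := w), add_comm, h]

lemma trans_left (h₁ : OnGeodesic T u w x) (hT : T.Connected) (h₂ : OnGeodesic T u v w) :
    OnGeodesic T u v x := by
  have hvx := hT.dist_triangle (u := v) (v := w) (w := x)
  have hux := hT.dist_triangle (u := u) (v := v) (w := x)
  unfold OnGeodesic at *
  omega

lemma trans_right (h₁ : OnGeodesic T u v x) (hT : T.Connected) (h₂ : OnGeodesic T v w x) :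
    OnGeodesic T u w x :=
  (h₁.symm.trans_left hT h₂.symm).symm

lemma trans_right_left (h₁ : OnGeodesic T u v x) (hT : T.Connected) (h₂ : OnGeodesic T v w x) :
    OnGeodesic T u v w := by
  have huw := hT.dist_triangle (u := u) (v := v) (w := w)
  have hux := hT.dist_triangle (u := u) (v := w) (w := x)
  unfold OnGeodesic at *
  omega

end OnGeodesic

lemma onGeodesic_of_mem_support {p : T.Walk u w} (hp : p.length = T.dist u w)
    (hv : v ∈ p.support) : OnGeodesic T u v w := by
  classical
  have hlength := congrArg Walk.length (p.take_spec hv)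
  rw [Walk.length_append] at hlength
  have hle₁ := dist_le (p.takeUntil v hv)
  have hle₂ := dist_le (p.dropUntil v hv)
  have htri := (p.takeUntil v hv).reachable.dist_triangle_left w
  unfold OnGeodesic
  omega

lemma exists_adj_onGeodesic (huv : T.Reachable u v) (hne : u ≠ v) :
    ∃ w, T.Adj u w ∧ OnGeodesic T u w v := by
  obtain ⟨p, hp⟩ := huv.exists_walk_length_eq_dist
  have hnil := Walk.not_nil_of_ne (p := p) hne
  exact ⟨p.snd, p.adj_snd hnil, onGeodesic_of_mem_support hp (p.getVert_mem_support 1)⟩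

lemma isPath_cons_of_onGeodesic (h : T.Adj u w) {p : T.Walk w v} (hp : p.length = T.dist w v)
    (hw : OnGeodesic T u w v) : (Walk.cons h p).IsPath := by
  refine Walk.isPath_of_length_eq_dist _ ?_
  rw [Walk.length_cons, hp, ← hw, dist_eq_one_iff_adj.mpr h, add_comm]

lemma eq_of_adj_of_onGeodesic (hT : T.IsAcyclic) (hux : T.Adj u x) (huy : T.Adj u y)
    (hx : OnGeodesic T u x v) (hy : OnGeodesic T u y v) : x = y := by
  have huv : T.Reachable u v := .of_dist_ne_zero <| by
    rw [← hx, dist_eq_one_iff_adj.mpr hux]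
    omega
  obtain ⟨p, hp⟩ := (hux.symm.reachable.trans huv).exists_walk_length_eq_dist
  obtain ⟨q, hq⟩ := (huy.symm.reachable.trans huv).exists_walk_length_eq_dist
  have hpq := (hT.subsingleton_path u v).elim ⟨_, isPath_cons_of_onGeodesic hux hp hx⟩
    ⟨_, isPath_cons_of_onGeodesic huy hq hy⟩
  simpa only [Walk.snd_cons] using congrArg (fun s : T.Path u v ↦ s.1.snd) hpq

lemma onGeodesic_or_onGeodesic_of_adj (hT : T.IsTree) (r : W) (h : T.Adj v w) :
    OnGeodesic T r w v ∨ OnGeodesic T r v w := by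
  have hvw := dist_eq_one_iff_adj.mpr h
  have hwv := dist_eq_one_iff_adj.mpr h.symm
  unfold OnGeodesic
  rw [hvw, hwv]
  exact (hT.dist_eq_dist_add_one_of_adj r h).imp Eq.symm Eq.symm

lemma root_mem_geodesicCone (r : W) (hS : S.Nonempty) : r ∈ geodesicCone T r S :=
  hS.imp fun y hy ↦ ⟨hy, onGeodesic_left T r y⟩

lemma connected_induce_geodesicCone (hT : T.Connected) (r : W) (hS : S.Nonempty) :
    (T.induce (geodesicCone T r S)).Connected := by
  refine induce_connected_of_patches r (root_mem_geodesicCone r hS) ?_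
  rintro v ⟨y, hy, hvy⟩
  obtain ⟨p, hp⟩ := hT.exists_walk_length_eq_dist r v
  refine ⟨{w | w ∈ p.support}, fun w hw ↦ ⟨y, hy, ?_⟩, p.start_mem_support, p.end_mem_support,
    p.connected_induce_support.preconnected _ _⟩
  exact hvy.trans_left hT (onGeodesic_of_mem_support hp hw)

lemma isTree_induce_geodesicCone (hT : T.IsTree) (r : W) (hS : S.Nonempty) :
    (T.induce (geodesicCone T r S)).IsTree :=
  ⟨connected_induce_geodesicCone hT.connected r hS, hT.isAcyclic.induce _⟩

end Geodesic

section Leaf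

variable {W : Type*} {T : SimpleGraph W} {r v x : W} {S : Set W}

/-- The leaves of `T`, that is, its vertices of degree one. The degree is expressed by `Set.ncard`
to agree with `endVertexCount`. -/
def leafSet (T : SimpleGraph W) : Set W :=
  {v | (T.neighborSet v).ncard = 1}

lemma mem_leafSet_iff_existsUnique_adj : v ∈ leafSet T ↔ ∃! w, T.Adj v w := by
  simp only [leafSet, Set.mem_ofPred_eq, Set.ncard_eq_one, Set.eq_singleton_iff_unique_mem,
    mem_neighborSet, ExistsUnique]

lemma ncard_leafSet_congr {W' : Type*} {T' : SimpleGraph W'} (e : T ≃g T') :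
    (leafSet T).ncard = (leafSet T').ncard := by
  refine Set.ncard_congr' (e.toEquiv.subtypeEquiv fun v ↦ ?_)
  change (T.neighborSet v).ncard = 1 ↔ (T'.neighborSet (e v)).ncard = 1
  rw [Set.ncard_congr' (e.mapNeighborSet v)]

lemma ncard_leafSet_le_two [Finite W] (hT : T.IsTree)
    (hdeg : ∀ v, (T.neighborSet v).ncard ≤ 2) : (leafSet T).ncard ≤ 2 := by
  classical
  have := Fintype.ofFinite W
  have ncard_eq_degree (v : W) : (T.neighborSet v).ncard = T.degree v :=
    Set.ncard_eq_toFinset_card' _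
  have hleaf : (leafSet T).ncard = ∑ v, if T.degree v = 1 then 1 else 0 := by
    rw [Finset.sum_boole, Set.ncard_eq_toFinset_card']
    congr 1
    ext v
    rw [Set.mem_toFinset, Finset.mem_filter_univ, ← ncard_eq_degree, leafSet, Set.mem_ofPred_eq]
  have hsum : ∑ v, T.degree v + 2 = ∑ _v : W, 2 := by
    rw [T.sum_degrees_eq_twice_card_edges, Finset.sum_const, Finset.card_univ,
      ← hT.card_edgeFinset, smul_eq_mul]
    ring
  have hbound : ∑ v, (T.degree v + if T.degree v = 1 then 1 else 0) ≤ ∑ _v : W, 2 := by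
    refine Finset.sum_le_sum fun v _ ↦ ?_
    have := ncard_eq_degree v ▸ hdeg v
    split_ifs <;> omega
  rw [Finset.sum_add_distrib, ← hleaf] at hbound
  omega

lemma exists_mem_leafSet_onGeodesic [Finite W] [Nontrivial W] (hT : T.IsTree) (r v : W) :
    ∃ y ∈ leafSet T, OnGeodesic T r v y := by
  obtain ⟨y, hvy, hmax⟩ := Set.exists_max_image {y | OnGeodesic T r v y} (T.dist r)
    (Set.toFinite _) ⟨v, onGeodesic_right T r v⟩
  have neighbor_towards_root (w : W) (hyw : T.Adj y w) : OnGeodesic T r w y := by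
    refine (onGeodesic_or_onGeodesic_of_adj hT r hyw).resolve_right fun hryw ↦ ?_
    have hle := hmax w (hryw.trans_left hT.connected hvy)
    rw [← hryw, dist_eq_one_iff_adj.mpr hyw] at hle
    omega
  obtain ⟨w, hyw⟩ := hT.connected.preconnected.exists_adj_of_nontrivial y
  refine ⟨y, mem_leafSet_iff_existsUnique_adj.mpr ⟨w, hyw, fun z hyz ↦ ?_⟩, hvy⟩
  exact eq_of_adj_of_onGeodesic hT.isAcyclic hyz hyw (neighbor_towards_root z hyz).symm
    (neighbor_towards_root w hyw).symm

lemma onGeodesic_of_notMem_geodesicCone [Finite W] [Nontrivial W] (hT : T.IsTree)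
    (hv : v ∉ geodesicCone T r (leafSet T \ {x})) : OnGeodesic T r v x := by
  obtain ⟨y, hy, hvy⟩ := exists_mem_leafSet_onGeodesic hT r v
  obtain rfl : y = x := by_contra fun hyx ↦ hv ⟨y, ⟨hy, hyx⟩, hvy⟩
  exact hvy

lemma mem_of_mem_leafSet_induce_geodesicCone (hT : T.Connected) (hmem : v ∈ geodesicCone T r S)
    (hv : ⟨v, hmem⟩ ∈ leafSet (T.induce (geodesicCone T r S))) (hvr : v ≠ r) : v ∈ S := by
  by_contra hvS
  obtain ⟨y, hy, hvy⟩ := id hmem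
  obtain ⟨p, hvp, hp⟩ := exists_adj_onGeodesic (hT.preconnected v r) hvr
  obtain ⟨c, hvc, hc⟩ :=
    exists_adj_onGeodesic (hT.preconnected v y) (ne_of_mem_of_not_mem hy hvS).symm
  have hp_mem : p ∈ geodesicCone T r S := ⟨y, hy, hvy.trans_left hT hp.symm⟩
  have hc_mem : c ∈ geodesicCone T r S := ⟨y, hy, hvy.trans_right hT hc⟩
  have hpc : (⟨p, hp_mem⟩ : geodesicCone T r S) = ⟨c, hc_mem⟩ :=
    (mem_leafSet_iff_existsUnique_adj.mp hv).unique hvp hvc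
  obtain rfl : p = c := congrArg Subtype.val hpc
  have hrvp : OnGeodesic T r v p := hvy.trans_right_left hT hc
  have hrpv : OnGeodesic T r p v := hp.symm
  have hvp_dist := dist_eq_one_iff_adj.mpr hvp
  unfold OnGeodesic at hrvp hrpv
  omega

lemma subsingleton_neighborSet_sdiff_geodesicCone [Finite W] (hT : T.IsTree) :
    (T.neighborSet r \ geodesicCone T r (leafSet T \ {x})).Subsingleton := by
  rintro a ⟨ha, ha_notMem⟩ b ⟨hb, hb_notMem⟩
  have : Nontrivial W := ⟨⟨r, a, ha.ne⟩⟩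
  exact eq_of_adj_of_onGeodesic hT.isAcyclic ha hb
    (onGeodesic_of_notMem_geodesicCone hT ha_notMem)
    (onGeodesic_of_notMem_geodesicCone hT hb_notMem)

lemma root_notMem_leafSet_induce_geodesicCone [Finite W] (hT : T.IsTree)
    (hr : 2 < (T.neighborSet r).ncard) (hmem : r ∈ geodesicCone T r (leafSet T \ {x})) :
    ⟨r, hmem⟩ ∉ leafSet (T.induce (geodesicCone T r (leafSet T \ {x}))) := by
  intro hleaf
  obtain ⟨a, -, ha⟩ := mem_leafSet_iff_existsUnique_adj.mp hleaf
  have hcover : T.neighborSet r ⊆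
      insert ↑a (T.neighborSet r \ geodesicCone T r (leafSet T \ {x})) := by
    intro b hb
    by_cases hb_mem : b ∈ geodesicCone T r (leafSet T \ {x})
    · exact Or.inl (congrArg Subtype.val (ha ⟨b, hb_mem⟩ hb))
    · exact Or.inr ⟨hb, hb_mem⟩
  have hle := (Set.ncard_le_ncard hcover).trans (Set.ncard_insert_le _ _)
  have hle_one := Set.ncard_le_one_iff_subsingleton.mpr
    (subsingleton_neighborSet_sdiff_geodesicCone hT (r := r) (x := x))
  omega

lemma image_leafSet_induce_geodesicCone_subset [Finite W] (hT : T.IsTree)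
    (hr : 2 < (T.neighborSet r).ncard) :
    Subtype.val '' leafSet (T.induce (geodesicCone T r (leafSet T \ {x}))) ⊆ leafSet T \ {x} := by
  rintro _ ⟨⟨v, hmem⟩, hv, rfl⟩
  by_cases hvr : v = r
  · subst hvr
    exact absurd hv (root_notMem_leafSet_induce_geodesicCone hT hr hmem)
  · exact mem_of_mem_leafSet_induce_geodesicCone hT.connected hmem hv hvr

lemma exists_ncard_compl_geodesicCone_lt [Finite W] (hT : T.IsTree) (r : W) {n : ℕ}
    (hleaf : 1 < (leafSet T).ncard) (hn : Nat.card W ≤ (leafSet T).ncard * n) :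
    ∃ x ∈ leafSet T, (geodesicCone T r (leafSet T \ {x}))ᶜ.ncard < n := by
  classical
  have := Fintype.ofFinite W
  have : Nontrivial W := Set.nontrivial_of_nontrivial (Set.one_lt_ncard_iff_nontrivial.mp hleaf)
  choose f hf_leaf hf using exists_mem_leafSet_onGeodesic hT r
  have hcard : (Finset.univ.erase r).card < (leafSet T).toFinset.card * n := by
    rw [← Set.ncard_eq_toFinset_card']
    refine (Finset.card_erase_lt_of_mem (Finset.mem_univ r)).trans_le ?_
    rwa [Finset.card_univ, ← Nat.card_eq_fintype_card]
  obtain ⟨x, hx, hlt⟩ := Finset.exists_card_fiber_lt_of_card_lt_mul (f := f) hcard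
  refine ⟨x, Set.mem_toFinset.mp hx, lt_of_le_of_lt ?_ hlt⟩
  rw [← Set.ncard_coe_finset]
  refine Set.ncard_le_ncard fun v hv ↦ ?_
  have hvr : v ≠ r := by
    rintro rfl
    exact hv (root_mem_geodesicCone v (Set.exists_ne_of_one_lt_ncard hleaf x))
  have hfv : f v = x := by_contra fun hne ↦ hv ⟨f v, ⟨hf_leaf v, hne⟩, hf v⟩
  simp [hvr, hfv]

lemma exists_isTree_induce_ncard_leafSet_lt [Finite W] (hT : T.IsTree) {n : ℕ}
    (hleaf : 2 < (leafSet T).ncard) (hn : Nat.card W ≤ (leafSet T).ncard * n) :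
    ∃ U : Set W, (T.induce U).IsTree ∧ (leafSet (T.induce U)).ncard < (leafSet T).ncard ∧
      Uᶜ.ncard < n := by
  obtain ⟨r, hr⟩ : ∃ r, 2 < (T.neighborSet r).ncard := by
    by_contra! hdeg
    exact hleaf.not_ge (ncard_leafSet_le_two hT hdeg)
  obtain ⟨x, hx, hlt⟩ := exists_ncard_compl_geodesicCone_lt hT r (by omega) hn
  have hne : (leafSet T \ {x}).Nonempty :=
    Set.exists_ne_of_one_lt_ncard (by omega : 1 < (leafSet T).ncard) x
  refine ⟨geodesicCone T r (leafSet T \ {x}), isTree_induce_geodesicCone hT r hne, ?_, hlt⟩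
  rw [← Set.ncard_image_of_injective _ Subtype.val_injective]
  exact (Set.ncard_le_ncard (image_leafSet_induce_geodesicCone_subset hT hr)).trans_lt
    (Set.ncard_sdiff_singleton_lt_of_mem hx)

end Leaf

section KEndedTree

variable {G : SimpleGraph V} {H : G.Subgraph} {k l : ℕ}

lemma endVertexCount_eq_ncard_leafSet_coe (H : G.Subgraph) :
    endVertexCount H = (leafSet H.coe).ncard := by
  rw [← Set.ncard_image_of_injective _ Subtype.val_injective, endVertexCount]
  congr 1
  ext v
  simp [leafSet, Set.ncard_congr' (Subgraph.coeNeighborSetEquiv _), and_comm]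

lemma isKEndedTree_singletonSubgraph (v : V) (hk : 1 ≤ k) :
    IsKEndedTree G k (G.singletonSubgraph v) :=
  Or.inr ⟨hk, Subgraph.singletonSubgraph_connected, Or.inl (by simp)⟩

lemma IsKEndedTree.mono {k' : ℕ} (hH : IsKEndedTree G k H) (hk : k ≤ k') :
    IsKEndedTree G k' H :=
  hH.imp (And.imp_right (·.trans hk)) (And.imp_left hk.trans')

lemma IsKEndedTree.connected (hH : IsKEndedTree G k H) : H.Connected :=
  hH.elim (fun h ↦ ⟨h.1.connected⟩) (·.2.1)

lemma exists_isKEndedTree_of_endVertexCount_eq (hH : H.coe.IsTree) (hfin : H.verts.Finite)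
    (hk : 2 ≤ k) (hends : endVertexCount H = k + 1) (hl : H.verts.ncard ≤ (k + 1) * l) :
    ∃ K : G.Subgraph, IsKEndedTree G k K ∧ H.verts.ncard < K.verts.ncard + l := by
  have := hfin.to_subtype
  rw [endVertexCount_eq_ncard_leafSet_coe] at hends
  obtain ⟨U, hU, hfewer, hsmall⟩ :=
    exists_isTree_induce_ncard_leafSet_lt hH (n := l) (by omega) (by rwa [hends])
  obtain ⟨s, hs, rfl⟩ : ∃ s ⊆ H.verts, Subtype.val ⁻¹' s = U :=
    ⟨Subtype.val '' U, Subtype.coe_image_subset _ U, Set.preimage_image_eq U Subtype.val_injective⟩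
  let e := H.coeInduceIso s hs
  refine ⟨H.induce s, Or.inl ⟨e.isTree_iff.mpr hU, ?_⟩, ?_⟩
  · rw [endVertexCount_eq_ncard_leafSet_coe, ncard_leafSet_congr e]
    exact Nat.le_of_lt_succ (hfewer.trans_eq hends)
  · have hs_card : (Subtype.val ⁻¹' s : Set H.verts).ncard = s.ncard :=
      Set.ncard_preimage_of_injective_subset_range Subtype.val_injective
        (Subtype.range_coe.symm ▸ hs)
    rw [← Nat.card_coe_set_eq H.verts, ← Set.ncard_add_ncard_compl (Subtype.val ⁻¹' s), hs_card]
    exact Nat.add_lt_add_left hsmall _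

lemma IsKEndedTree.exists_isKEndedTree_ncard_lt_add (hH : IsKEndedTree G (k + 1) H)
    (hfin : H.verts.Finite) (hk : 2 ≤ k) (hl : H.verts.ncard ≤ (k + 1) * l) :
    ∃ K : G.Subgraph, IsKEndedTree G k K ∧ H.verts.ncard < K.verts.ncard + l := by
  by_cases hHk : IsKEndedTree G k H
  · have hpos : 0 < H.verts.ncard := hH.connected.nonempty.ncard_pos hfin
    exact ⟨H, hHk, Nat.lt_add_of_pos_right (Nat.pos_of_mul_pos_left (hpos.trans_le hl))⟩
  rcases hH with ⟨htree, hends⟩ | ⟨-, hcycle⟩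
  · have hends_ge : k < endVertexCount H := not_le.mp fun hle ↦ hHk (Or.inl ⟨htree, hle⟩)
    exact exists_isKEndedTree_of_endVertexCount_eq htree hfin hk (by omega) hl
  · exact absurd (Or.inr ⟨by omega, hcycle⟩) hHk

/-- The orders of the `k`-ended trees in `G`, whose supremum is `t_k`. -/
def kEndedOrders (G : SimpleGraph V) (k : ℕ) : Set ℕ :=
  {n | ∃ H : G.Subgraph, IsKEndedTree G k H ∧ H.verts.ncard = n}

lemma kEndedOrders_mono (G : SimpleGraph V) : Monotone (kEndedOrders G) :=
  fun _ _ hk _ ⟨H, hH, hcard⟩ ↦ ⟨H, hH.mono hk, hcard⟩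

lemma bddAbove_kEndedOrders [Finite V] (G : SimpleGraph V) (k : ℕ) :
    BddAbove (kEndedOrders G k) :=
  ⟨Nat.card V, fun _ ⟨H, _, hcard⟩ ↦ hcard ▸ Set.ncard_le_card H.verts⟩

lemma one_mem_kEndedOrders [Nonempty V] (G : SimpleGraph V) (hk : 1 ≤ k) :
    1 ∈ kEndedOrders G k :=
  ⟨_, isKEndedTree_singletonSubgraph (Classical.arbitrary V) hk, Set.ncard_singleton _⟩

end KEndedTree

theorem theorem1_general [Nonempty V] (G : SimpleGraph V) (k l : ℕ) (hk : 2 ≤ k)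
    (hbdd : BddAbove (kEndedOrders G (k + 1)))
    (h : (maxKEndedOrder G (k + 1) : ℚ) / (k + 1) ≤ l) :
    maxKEndedOrder G k + l ≥ maxKEndedOrder G (k + 1) + 1 := by
  have one_mem : 1 ∈ kEndedOrders G (k + 1) := one_mem_kEndedOrders G (by omega)
  obtain ⟨H, hH, hcard⟩ : maxKEndedOrder G (k + 1) ∈ kEndedOrders G (k + 1) :=
    Nat.sSup_mem ⟨1, one_mem⟩ hbdd
  have hfin : H.verts.Finite :=
    Set.finite_of_ncard_pos (hcard ▸ le_csSup hbdd one_mem)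
  have hl : H.verts.ncard ≤ (k + 1) * l := by
    rw [div_le_iff₀' (by positivity)] at h
    exact_mod_cast hcard ▸ h
  obtain ⟨K, hK, hlt⟩ := hH.exists_isKEndedTree_ncard_lt_add hfin hk hl
  have hle : K.verts.ncard ≤ maxKEndedOrder G k :=
    le_csSup (hbdd.mono (kEndedOrders_mono G k.le_succ)) ⟨K, hK, rfl⟩
  omega

/-- **Theorem 1.** If `G` is connected, `k ≥ 2`, `λ ≥ 1` and `λ ≥ t_{k+1}/(k+1)`,
then `t_k ≥ t_{k+1} - λ + 1`. -/
theorem theorem1 [Fintype V] (G : SimpleGraph V) (hG : G.Connected)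
    (k l : ℕ) (hk : 2 ≤ k) (hl : 1 ≤ l)
    (h : (maxKEndedOrder G (k + 1) : ℚ) / (k + 1) ≤ l) :
    maxKEndedOrder G k + l ≥ maxKEndedOrder G (k + 1) + 1 := by
  have := hG.nonempty
  exact theorem1_general G k l hk (bddAbove_kEndedOrders G (k + 1)) h
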